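/- arXiv:2401.14190 — 3 statements merged into one kernel-verified Lean document; each statement's English description precedes it below -/
import Mathlib

section
/- Let n, k be natural numbers, let v₁, …, v_k ∈ ℚ^n, let W₀ ⊆ ℝ^n be the ℝ-linear span of v₁, …, v_k (viewed in ℝ^n via the coercion ℚ → ℝ), and let D₁ ∈ ℚ^n. Suppose D₂ ∈ ℝ^n satisfies D₂ − D₁ ∈ W₀ and D₂ ≥ 0 componentwise. Then there exist ℓ ≥ 1, rational vectors G₁, …, G_ℓ ∈ ℚ^n with Gᵢ − D₁ in the ℚ-linear span of v₁, …, v_k and Gᵢ ≥ 0 componentwise for each i, and positive real numbers t₁, …, t_ℓ with t₁ + ⋯ + t_ℓ = 1, such that D₂ = t₁ G₁ + ⋯ + t_ℓ G_ℓ. (This is the decomposition claim in the proof of Lemma 2.7(b) of the paper: every point of the rational polyhedron V = {G ∈ D₁ + W₀ : G ≥ 0} is a convex combination of finitely many rational points of V.) -/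
lemma aux_decomp (k : ℕ) (c : Fin k → ℝ) : ∃ (m : ℕ) (b : Fin m → ℝ) (r : Fin k → ℚ)
    (e : Fin k → Fin m → ℚ), (∀ j, c j = r j + ∑ i, b i * e j i) ∧
    (∀ (g : ℚ) (w : Fin m → ℚ), (g : ℝ) + ∑ i, b i * w i = 0 → g = 0 ∧ ∀ i, w i = 0) := by
  obtain ⟨C, hC⟩ := Submodule.exists_isCompl (Submodule.span ℚ {(1 : ℝ)})
  have h1 : ∀ j, ∃ (r : ℚ) (d : ℝ), d ∈ C ∧ c j = r + d := by
    intro j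
    have : c j ∈ Submodule.span ℚ {(1 : ℝ)} ⊔ C := by rw [hC.sup_eq_top]; trivial
    obtain ⟨y, hy, z, hz, hyz⟩ := Submodule.mem_sup.1 this
    obtain ⟨r, rfl⟩ := Submodule.mem_span_singleton.1 hy
    refine ⟨r, z, hz, ?_⟩
    rw [← hyz, Rat.smul_def, mul_one]
  choose r d hd hc using h1
  have hfin : FiniteDimensional ℚ (Submodule.span ℚ (Set.range d)) :=
    FiniteDimensional.span_of_finite ℚ (Set.finite_range d)
  let B := Module.finBasis ℚ (Submodule.span ℚ (Set.range d))
  have hle : Submodule.span ℚ (Set.range d) ≤ C :=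
    Submodule.span_le.2 (by rintro _ ⟨j, rfl⟩; exact hd j)
  let D : Fin k → Submodule.span ℚ (Set.range d) :=
    fun j => ⟨d j, Submodule.subset_span ⟨j, rfl⟩⟩
  have key : ∀ w : Fin _ → ℚ, ((∑ i, w i • B i : Submodule.span ℚ (Set.range d)) : ℝ)
      = ∑ i, (B i : ℝ) * w i := by
    intro w
    push_cast
    exact Finset.sum_congr rfl fun i _ => by rw [Rat.smul_def, mul_comm]
  refine ⟨_, fun i => (B i : ℝ), r, fun j i => B.repr (D j) i, ?_, ?_⟩
  · intro j
    rw [← key, B.sum_repr, hc j]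
  · intro g w h
    rw [← key] at h
    have hg : (g : ℝ) ∈ Submodule.span ℚ {(1 : ℝ)} :=
      Submodule.mem_span_singleton.2 ⟨g, by rw [Rat.smul_def, mul_one]⟩
    have hs := hle (∑ i, w i • B i).2
    have hg' : (g : ℝ) ∈ C := by
      rw [eq_neg_of_add_eq_zero_left h]; exact C.neg_mem hs
    have hg0 : (g : ℝ) = 0 := Submodule.disjoint_def.1 hC.disjoint _ hg hg'
    refine ⟨by exact_mod_cast hg0, ?_⟩
    rw [hg0, zero_add] at h
    have h0 : ∑ i, w i • B i = 0 := Subtype.ext h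
    exact Fintype.linearIndependent_iff.1 B.linearIndependent w h0

lemma aux_box (m : ℕ) (b : Fin m → ℝ) (ε : ℝ) (hε : 0 < ε) :
    b ∈ convexHull ℝ {x : Fin m → ℝ | ∃ q : Fin m → ℚ, (x = fun i => (q i : ℝ)) ∧
      ∀ i, |x i - b i| < ε} := by
  have h : b ∈ convexHull ℝ (Set.univ.pi fun i => {y : ℝ | ∃ q : ℚ, y = q ∧ |y - b i| < ε}) := by
    rw [convexHull_pi]
    intro i _
    obtain ⟨p, hp1, hp2⟩ := exists_rat_btwn (show b i - ε < b i by linarith)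
    obtain ⟨q, hq1, hq2⟩ := exists_rat_btwn (show b i < b i + ε by linarith)
    refine segment_subset_convexHull (x := (p : ℝ)) (y := (q : ℝ)) ?_ ?_ ?_
    · exact ⟨p, rfl, abs_lt.2 ⟨by linarith, by linarith⟩⟩
    · exact ⟨q, rfl, abs_lt.2 ⟨by linarith, by linarith⟩⟩
    · rw [segment_eq_Icc (by linarith)]; exact ⟨hp2.le, hq1.le⟩
  refine convexHull_mono ?_ h
  intro x hx
  choose q hq hq2 using fun i => hx i (Set.mem_univ i)
  exact ⟨q, funext hq, hq2⟩


/-- Every nonnegative real point of the rational affine subspace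
`D₁ + span ℝ {v₁, …, v_k}` is a convex combination of finitely many
nonnegative rational points of that affine subspace. -/
theorem nonneg_point_of_rational_affine_subspace_is_convex_combination
    (n k : ℕ) (v : Fin k → (Fin n → ℚ)) (D₁ : Fin n → ℚ) (D₂ : Fin n → ℝ)
    (hmem : (fun i => D₂ i - (D₁ i : ℝ)) ∈
      Submodule.span ℝ (Set.range fun j => fun i => ((v j i : ℚ) : ℝ)))
    (hpos : ∀ i, 0 ≤ D₂ i) :
    ∃ (ℓ : ℕ), 1 ≤ ℓ ∧
      ∃ (G : Fin ℓ → (Fin n → ℚ)) (t : Fin ℓ → ℝ),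
        (∀ i, G i - D₁ ∈ Submodule.span ℚ (Set.range v)) ∧
        (∀ i j, 0 ≤ G i j) ∧
        (∀ i, 0 < t i) ∧
        (∑ i, t i = 1) ∧
        D₂ = ∑ i, t i • fun j => ((G i j : ℚ) : ℝ) := by
  obtain ⟨c, hc⟩ := (Submodule.mem_span_range_iff_exists_fun ℝ).1 hmem
  obtain ⟨m, b, r, e, hce, hind⟩ := aux_decomp k c
  -- rational data of the affine map
  let g : Fin n → ℚ := fun s => D₁ s + ∑ j, r j * v j s
  let w : Fin m → Fin n → ℚ := fun i s => ∑ j, e j i * v j s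
  let F : (Fin m → ℝ) → (Fin n → ℝ) := fun x s => (g s : ℝ) + ∑ i, x i * (w i s : ℝ)
  have hF : F b = D₂ := by
    funext s
    have h1 := congrFun hc s
    simp only [Finset.sum_apply, Pi.smul_apply, smul_eq_mul] at h1
    have h2 : D₂ s = D₁ s + ∑ j, c j * v j s := by rw [h1]; ring
    rw [h2]
    simp only [F, g, w]
    push_cast
    simp only [hce, add_mul, Finset.sum_add_distrib, Finset.sum_mul, Finset.mul_sum]
    rw [Finset.sum_comm (s := (Finset.univ : Finset (Fin k))), add_assoc]
    simp only [mul_assoc]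
  have hcont : Continuous F := by fun_prop
  have hopen : IsOpen {x | ∀ s, 0 < D₂ s → 0 < F x s} := by
    simp only [Set.ofPred_forall]
    refine isOpen_iInter_of_finite fun s => isOpen_iInter_of_finite fun _ => ?_
    exact isOpen_lt continuous_const ((continuous_apply s).comp hcont)
  obtain ⟨ε, hε, hball⟩ := Metric.isOpen_iff.1 hopen b (by intro s hs; rwa [hF])
  let P : Set (Fin n → ℝ) := {x | ∃ G : Fin n → ℚ, (x = fun s => (G s : ℝ)) ∧
    G - D₁ ∈ Submodule.span ℚ (Set.range v) ∧ ∀ s, 0 ≤ G s}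
  have hconv : Convex ℝ (F ⁻¹' convexHull ℝ P) := by
    intro x hx y hy p q hp hq hpq
    have := convex_convexHull ℝ P hx hy hp hq hpq
    rw [Set.mem_preimage]
    convert this using 1
    funext s
    simp only [F, Pi.add_apply, Pi.smul_apply, smul_eq_mul, add_mul, Finset.sum_add_distrib,
      mul_add, Finset.mul_sum, mul_assoc]
    linear_combination (-(g s : ℝ)) * hpq
  have hD : D₂ ∈ convexHull ℝ P := by
    rw [← hF]
    refine convexHull_min ?_ hconv (aux_box m b ε hε)
    rintro x ⟨q, hxq, hx⟩
    refine subset_convexHull ℝ P ⟨fun s => g s + ∑ i, q i * w i s, ?_, ?_, ?_⟩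
    · funext s
      simp only [F, hxq]
      push_cast
      rfl
    · refine (Submodule.mem_span_range_iff_exists_fun ℚ).2 ⟨fun j => r j + ∑ i, q i * e j i, ?_⟩
      funext s
      simp only [Finset.sum_apply, Pi.smul_apply, smul_eq_mul, Pi.sub_apply, g, w, add_mul,
        Finset.sum_add_distrib, Finset.sum_mul, Finset.mul_sum, mul_assoc]
      rw [Finset.sum_comm (s := (Finset.univ : Finset (Fin k)))]
      ring
    · intro s
      rcases (hpos s).eq_or_lt with h0 | h0
      · have h3 : (g s : ℝ) + ∑ i, b i * (w i s : ℝ) = 0 := by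
          rw [h0, ← hF]
        obtain ⟨h4, h5⟩ := hind _ _ h3
        simp [h4, h5]
      · have hxb : x ∈ Metric.ball b ε := by
          rw [Metric.mem_ball, dist_pi_lt_iff hε]
          intro i; rw [Real.dist_eq]; exact hx i
        have := hball hxb s h0
        simp only [F, hxq] at this
        exact_mod_cast this.le
  obtain ⟨ι, _, z, t, hz, -, ht, hsum, hz2⟩ := eq_pos_convex_span_of_mem_convexHull hD
  choose G hG1 hG2 hG3 using fun i => hz ⟨i, rfl⟩
  let E := (Fintype.equivFin ι).symm
  refine ⟨Fintype.card ι, ?_, fun i => G (E i), fun i => t (E i), fun i => hG2 _,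
    fun i => hG3 _, fun i => ht _, ?_, ?_⟩
  · rw [Nat.one_le_iff_ne_zero, Ne, Fintype.card_eq_zero_iff]
    intro h
    simp at hsum
  · rw [← hsum]; exact E.sum_comp t
  · rw [← hz2, ← E.sum_comp]
    exact Finset.sum_congr rfl fun i _ => by rw [hG1]
end

section
/- Let n, k be natural numbers, let v₁, …, v_k ∈ ℚ^n, let W₀ ⊆ ℝ^n be the ℝ-linear span of v₁, …, v_k (viewed in ℝ^n via the coercion ℚ → ℝ), and let D₁ ∈ ℚ^n with D₁ ≥ 0 componentwise. Assume that D₁ is the unique vector G ∈ ℚ^n with G ≥ 0 componentwise and G − D₁ in the ℚ-linear span of v₁, …, v_k. Then D₁ is also the unique nonnegative real representative of its coset: every D₂ ∈ ℝ^n with D₂ − D₁ ∈ W₀ and D₂ ≥ 0 componentwise satisfies D₂ = D₁. (This is the abstract content of Lemma 2.7(b) of the paper: on a ℚ-factorial projective variety, if D₁ ≥ 0, D₂ ≥ 0 are ℝ-linearly equivalent and κ(X, D₁) = 0, then D₁ = D₂, where the κ = 0 hypothesis enters exactly through the uniqueness of the nonnegative rational representative and v₁, …, v_k play the role of the principal divisors.)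 -/
/-- A finite-dimensional rational subspace of `ℝ` has rational functionals approximating
the inclusion on finitely many elements. -/
theorem exists_rational_functional_near (S : Submodule ℚ ℝ) [FiniteDimensional ℚ S]
    {n : ℕ} (x : Fin n → S) (ε : Fin n → ℝ) (hε : ∀ j, 0 < ε j) :
    ∃ φ : S →ₗ[ℚ] ℚ, ∀ j, |((φ (x j) : ℚ) : ℝ) - (x j : ℝ)| < ε j := by
  let b := Module.finBasis ℚ S
  let U : Set (Fin (Module.finrank ℚ S) → ℝ) :=
    ⋂ j, {e | |(∑ l, ((b.repr (x j) l : ℚ) : ℝ) * e l) - (x j : ℝ)| < ε j}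
  have hU : IsOpen U := by
    refine isOpen_iInter_of_finite fun j => ?_
    exact isOpen_lt (by fun_prop) continuous_const
  have hb : (fun l => ((b l : S) : ℝ)) ∈ U := by
    refine Set.mem_iInter.2 fun j => ?_
    have h : (∑ l, ((b.repr (x j) l : ℚ) : ℝ) * ((b l : S) : ℝ)) = (x j : ℝ) := by
      have h' := congrArg (fun y : S => (y : ℝ)) (b.sum_repr (x j))
      simpa only [Submodule.coe_sum, Submodule.coe_smul, Rat.smul_def] using h'
    simp only [Set.mem_ofPred_eq, h, sub_self, abs_zero]
    exact hε j
  have hd : DenseRange (Pi.map fun (_ : Fin (Module.finrank ℚ S)) (q : ℚ) => (q : ℝ)) :=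
    DenseRange.piMap fun _ => Rat.denseRange_cast
  obtain ⟨q, hq⟩ := hd.exists_mem_open hU ⟨_, hb⟩
  refine ⟨b.constr ℚ q, fun j => ?_⟩
  have := Set.mem_iInter.1 hq j
  simpa [Module.Basis.constr_apply_fintype] using this

/-- If `D₁` is the unique nonnegative rational vector in its coset modulo the
ℚ-linear span of finitely many rational vectors, then `D₁` is also the unique
nonnegative real vector in its coset modulo their ℝ-linear span. -/
theorem unique_nonneg_rational_representative_implies_unique_real
    (n k : ℕ) (v : Fin k → (Fin n → ℚ)) (D₁ : Fin n → ℚ)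
    (hD₁pos : ∀ j, 0 ≤ D₁ j)
    (huniq : ∀ G : Fin n → ℚ, (∀ j, 0 ≤ G j) →
      G - D₁ ∈ Submodule.span ℚ (Set.range v) → G = D₁)
    (D₂ : Fin n → ℝ)
    (hmem : (fun j => D₂ j - (D₁ j : ℝ)) ∈
      Submodule.span ℝ (Set.range fun i => fun j => ((v i j : ℚ) : ℝ)))
    (hD₂pos : ∀ j, 0 ≤ D₂ j) :
    D₂ = fun j => ((D₁ j : ℚ) : ℝ) := by
  obtain ⟨c, hc⟩ := (Submodule.mem_span_range_iff_exists_fun ℝ).1 hmem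
  have hw : ∀ j, ∑ i, c i * (v i j : ℝ) = D₂ j - D₁ j := fun j => by
    simpa using congrFun hc j
  let S : Submodule ℚ ℝ := Submodule.span ℚ (Set.range c)
  have : FiniteDimensional ℚ S := FiniteDimensional.span_of_finite ℚ (Set.finite_range c)
  let cS : Fin k → S := fun i => ⟨c i, Submodule.subset_span ⟨i, rfl⟩⟩
  let x : Fin n → S := fun j => ∑ i, v i j • cS i
  have hx : ∀ j, (x j : ℝ) = D₂ j - D₁ j := fun j => by
    rw [← hw j]
    simp [x, cS, Rat.smul_def, mul_comm]
  obtain ⟨φ, hφ⟩ := exists_rational_functional_near S x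
    (fun j => if (x j : ℝ) = 0 then 1 else |(x j : ℝ)|) (fun j => by
      split_ifs with h
      · exact one_pos
      · exact abs_pos.2 h)
  have hG := huniq (fun j => D₁ j + φ (x j) / 2) (fun j => by
      have h1 := hφ j
      have h2 := hD₂pos j
      have h3 := hx j
      by_cases h : (x j : ℝ) = 0
      · have : x j = 0 := Subtype.ext h
        simpa [this] using hD₁pos j
      · rw [if_neg h] at h1
        have h4 : (0 : ℝ) ≤ D₁ j := by exact_mod_cast hD₁pos j
        have : (0 : ℝ) ≤ D₁ j + (φ (x j) : ℚ) / 2 := by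
          rcases abs_cases (x j : ℝ) with h5 | h5 <;> rw [h5.1, abs_lt] at h1 <;> linarith
        exact_mod_cast this) (by
      refine (Submodule.mem_span_range_iff_exists_fun ℚ).2 ⟨fun i => φ (cS i) / 2, ?_⟩
      funext j
      simp only [Finset.sum_apply, Pi.smul_apply, Pi.sub_apply, smul_eq_mul, x, map_sum, map_smul,
        add_sub_cancel_left, Finset.sum_div]
      exact Finset.sum_congr rfl fun i _ => by ring)
  funext j
  have h0 : φ (x j) = 0 := by
    have := congrFun hG j
    linarith
  have h1 := hφ j
  by_cases h : (x j : ℝ) = 0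
  · linarith [hx j]
  · rw [if_neg h, h0] at h1
    simp at h1
end

section
/- Let n be a natural number, let W₀ ⊆ ℝ^n be an ℝ-linear subspace, let G, H ∈ ℝ^n with H ≥ 0 componentwise, and let (ε_m)_{m ∈ ℕ} be a strictly decreasing sequence of positive real numbers with limit 0. Assume: (i) for every m ∈ ℕ there exists D_m ∈ ℝ^n with D_m ≥ 0 componentwise and D_m − (G + ε_m H) ∈ W₀; and (ii) the coset G + ε₁ H + W₀ contains exactly one componentwise nonnegative vector D₁. Then D₁ − ε₁ H ≥ 0 componentwise and (D₁ − ε₁ H) − G ∈ W₀; in particular, the coset G + W₀ contains a componentwise nonnegative vector. (This is the abstract content of the proof of Lemma 3.1 of the paper: for each m, D_m + (ε₁ − ε_m)H is a nonnegative vector of the coset G + ε₁H + W₀, hence equals D₁ by uniqueness, so D₁ ≥ (ε₁ − ε_m)H for all m, and letting m → ∞ gives D₁ ≥ ε₁ H, whence G + W₀ contains the nonnegative vector D₁ − ε₁ H; in the paper this shows that if κ_ι(X, G + ε_m H) = 0 for all m then κ_ι(X, G) = 0.) -/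
/-- If for a strictly decreasing null sequence `ε` of positive reals the coset
`G + ε m • H + W₀` contains a nonnegative vector for every `m`, and the coset
`G + ε 0 • H + W₀` contains exactly one nonnegative vector `D₁`, then
`D₁ - ε 0 • H` is nonnegative and lies in the coset `G + W₀`; in particular,
the coset `G + W₀` contains a componentwise nonnegative vector. -/
theorem nonneg_in_limit_coset
    (n : ℕ) (W₀ : Submodule ℝ (Fin n → ℝ)) (G H : Fin n → ℝ)
    (hH : ∀ j, 0 ≤ H j)
    (ε : ℕ → ℝ) (hanti : StrictAnti ε) (hpos : ∀ m, 0 < ε m)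
    (hlim : Filter.Tendsto ε Filter.atTop (nhds 0))
    (hexists : ∀ m, ∃ D : Fin n → ℝ, (∀ j, 0 ≤ D j) ∧ D - (G + ε m • H) ∈ W₀)
    (D₁ : Fin n → ℝ) (hD₁pos : ∀ j, 0 ≤ D₁ j)
    (hD₁mem : D₁ - (G + ε 0 • H) ∈ W₀)
    (huniq : ∀ D : Fin n → ℝ, (∀ j, 0 ≤ D j) → D - (G + ε 0 • H) ∈ W₀ →
      D = D₁) :
    (∀ j, 0 ≤ D₁ j - ε 0 * H j) ∧ (D₁ - ε 0 • H) - G ∈ W₀ := by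
  constructor
  · intro j
    have key : ∀ m, (ε 0 - ε m) * H j ≤ D₁ j := by
      intro m
      obtain ⟨D, hD, hDm⟩ := hexists m
      have hle : 0 ≤ ε 0 - ε m := sub_nonneg.mpr (hanti.antitone (Nat.zero_le m))
      have h := huniq (D + (ε 0 - ε m) • H)
        (fun i => add_nonneg (hD i) (mul_nonneg hle (hH i)))
        (by
          have e : D + (ε 0 - ε m) • H - (G + ε 0 • H) = D - (G + ε m • H) := by
            module
          rw [e]
          exact hDm)
      have hj := congrFun h j
      simp only [Pi.add_apply, Pi.smul_apply, smul_eq_mul] at hj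
      linarith [hD j]
    have ht : Filter.Tendsto (fun m => (ε 0 - ε m) * H j) Filter.atTop
        (nhds ((ε 0 - 0) * H j)) := (hlim.const_sub (ε 0)).mul_const (H j)
    have := le_of_tendsto' ht key
    rw [sub_zero] at this
    linarith
  · have e : D₁ - ε 0 • H - G = D₁ - (G + ε 0 • H) := by module
    rw [e]
    exact hD₁mem
end
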